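/- arXiv:2502.11640 — 5 statements merged into one kernel-verified Lean document; each statement's English description precedes it below -/
import Mathlib

section
/- Let α > 1 and let V be a real normed space whose topological dual V* is strictly convex, so that the generalized duality mapping is single-valued; denote by j(u) the unique element of J(u). Then j is demicontinuous from the norm topology of V to the weak-* topology of V*: if (u_n) is a sequence in V with ‖u_n − u‖_V → 0, then j(u_n) converges to j(u) in the weak-* topology σ(V*, V). -/
open NormedSpace Filter Topology

/-- The generalized duality mapping with exponent `α` on a real normed space `V`:
`J(u) = {v ∈ V* | ⟨v,u⟩ = ‖u‖^α = ‖v‖^{α/(α-1)}}`. -/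
def genJ (α : ℝ) (V : Type*) [NormedAddCommGroup V] [NormedSpace ℝ V] (u : V) :
    Set (StrongDual ℝ V) :=
  {v : StrongDual ℝ V | v u = ‖u‖ ^ α ∧ ‖v‖ ^ (α / (α - 1)) = ‖u‖ ^ α}

/-- A multivalued operator `A : V → Set V*` is monotone if
`⟨v₁ - v₂, u₁ - u₂⟩ ≥ 0` for all `v₁ ∈ A u₁`, `v₂ ∈ A u₂`. -/
def MonotoneOp {V : Type*} [NormedAddCommGroup V] [NormedSpace ℝ V]
    (A : V → Set (StrongDual ℝ V)) : Prop :=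
  ∀ u₁ u₂ : V, ∀ v₁ ∈ A u₁, ∀ v₂ ∈ A u₂, 0 ≤ (v₁ - v₂) (u₁ - u₂)

/-- A monotone multivalued operator is maximal monotone if its graph is not properly
contained in the graph of any other monotone operator. -/
def MaximalMonotoneOp {V : Type*} [NormedAddCommGroup V] [NormedSpace ℝ V]
    (A : V → Set (StrongDual ℝ V)) : Prop :=
  MonotoneOp A ∧
    ∀ B : V → Set (StrongDual ℝ V), MonotoneOp B → (∀ u, A u ⊆ B u) → ∀ u, B u = A u

/-- when the dual is strictly convex, the single-valued duality map is
demicontinuous from the norm topology into the weak-* topology (pointwise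
convergence on V). -/
theorem statement3 (α : ℝ) (hα : 1 < α) (V : Type*) [NormedAddCommGroup V]
    [NormedSpace ℝ V] [StrictConvexSpace ℝ (StrongDual ℝ V)]
    (j : V → StrongDual ℝ V) (hj : ∀ u : V, j u ∈ genJ α V u)
    (u : ℕ → V) (x : V)
    (hconv : Tendsto (fun n => ‖u n - x‖) atTop (𝓝 0)) :
    ∀ w : V, Tendsto (fun n => (j (u n)) w) atTop (𝓝 ((j x) w)) := by
  intro w
  have ha : 0 < α - 1 := by linarith
  have hnorm : ∀ y : V, ‖j y‖ = ‖y‖ ^ (α - 1) := by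
    intro y
    have h := (hj y).2
    have h2 : (‖j y‖ ^ (α / (α - 1))) ^ ((α - 1) / α) = (‖y‖ ^ α) ^ ((α - 1) / α) := by rw [h]
    rw [← Real.rpow_mul (norm_nonneg _), ← Real.rpow_mul (norm_nonneg _)] at h2
    have e1 : α / (α - 1) * ((α - 1) / α) = 1 := by field_simp
    have e2 : α * ((α - 1) / α) = α - 1 := by field_simp
    rwa [e1, e2, Real.rpow_one] at h2
  have hu : Tendsto u atTop (𝓝 x) := tendsto_iff_norm_sub_tendsto_zero.2 hconv
  have hN : Tendsto (fun n => ‖u n‖ ^ (α - 1)) atTop (𝓝 (‖x‖ ^ (α - 1))) :=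
    hu.norm.rpow_const (Or.inr ha.le)
  have hA : Tendsto (fun n => ‖u n‖ ^ α) atTop (𝓝 (‖x‖ ^ α)) :=
    hu.norm.rpow_const (Or.inr (by linarith))
  obtain ⟨C, hC⟩ := hN.bddAbove_range
  have hC' : ∀ n, ‖j (u n)‖ ≤ C := fun n => by
    rw [hnorm]; exact hC ⟨n, rfl⟩
  have hzero : Tendsto (fun n => j (u n) (u n - x)) atTop (𝓝 0) := by
    refine squeeze_zero_norm (a := fun n => C * ‖u n - x‖) (fun n => ?_) ?_
    · exact (j (u n)).le_of_opNorm_le (hC' n) _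
    · simpa using hconv.const_mul C
  have hx : Tendsto (fun n => j (u n) x) atTop (𝓝 (‖x‖ ^ α)) := by
    have h := hA.sub hzero
    rw [sub_zero] at h
    refine h.congr fun n => ?_
    rw [← (hj (u n)).1, map_sub]; ring
  rw [tendsto_iff_ultrafilter]
  intro g hg
  have hcomp := WeakDual.isCompact_closedBall (𝕜 := ℝ) (0 : StrongDual ℝ V) C
  obtain ⟨v', -, hv'⟩ := hcomp.ultrafilter_le_nhds
    (g.map (fun n => StrongDual.toWeakDual (j (u n)))) (by
      rw [le_principal_iff]
      refine Filter.mem_map.2 (Filter.univ_mem' fun n => ?_)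
      simpa using hC' n)
  have hvt : Tendsto (fun n => StrongDual.toWeakDual (j (u n))) g (𝓝 v') := hv'
  obtain ⟨v, rfl⟩ := StrongDual.toWeakDual.surjective v'
  have hpt : ∀ y : V, Tendsto (fun n => j (u n) y) g (𝓝 (v y)) := fun y =>
    ((WeakDual.eval_continuous y).tendsto _).comp hvt
  have hvx : v x = ‖x‖ ^ α := tendsto_nhds_unique (hpt x) (hx.mono_left hg)
  have hvn : ‖v‖ ≤ ‖x‖ ^ (α - 1) := by
    refine v.opNorm_le_bound (by positivity) fun y => ?_
    refine le_of_tendsto_of_tendsto (hpt y).norm ((hN.mono_left hg).mul_const ‖y‖) ?_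
    refine Filter.Eventually.of_forall fun n => ?_
    exact (j (u n)).le_of_opNorm_le (hnorm _).le _
  suffices hvj : v = j x by
    have := hpt w
    rwa [hvj] at this
  rcases eq_or_ne x 0 with h0 | h0
  · have hz : ‖x‖ ^ (α - 1) = 0 := by rw [h0, norm_zero, Real.zero_rpow ha.ne']
    have h1 : v = 0 := norm_le_zero_iff.1 (hz ▸ hvn)
    have h2 : j x = 0 := norm_le_zero_iff.1 (by rw [hnorm, hz])
    rw [h1, h2]
  · have hp : 0 < ‖x‖ := norm_pos_iff.2 h0
    have hm : ‖x‖ ^ α = ‖x‖ ^ (α - 1) * ‖x‖ := by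
      rw [← Real.rpow_add_one hp.ne']; congr 1; ring
    have hv2 : ‖x‖ ^ (α - 1) ≤ ‖v‖ := by
      have := (le_abs_self _).trans (v.le_opNorm x)
      rw [hvx, hm] at this
      exact le_of_mul_le_mul_right this hp
    have hs : ‖x‖ ^ (α - 1) + ‖x‖ ^ (α - 1) ≤ ‖v + j x‖ := by
      have := (le_abs_self _).trans ((v + j x).le_opNorm x)
      rw [ContinuousLinearMap.add_apply, hvx, (hj x).1, hm, ← add_mul] at this
      exact le_of_mul_le_mul_right this hp
    have hve := le_antisymm hvn hv2
    refine eq_of_norm_eq_of_norm_add_eq (hve.trans (hnorm x).symm) ?_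
    exact le_antisymm (norm_add_le _ _) (by rw [hve, hnorm]; exact hs)
end

section
/- Let α > 1, let V be a reflexive real Banach space such that both V and its dual V* are uniformly convex, and let A : V → Set V* be a maximal-monotone multivalued operator. Then for every λ > 0 and every x ∈ V there exists a unique x_λ ∈ V solving the resolvent equation 0 ∈ J(x_λ − x) + λ A(x_λ), i.e. there exist w ∈ J(x_λ − x) and y ∈ A(x_λ) with w + λ y = 0, and any two such solutions coincide. -/
open NormedSpace Filter Topology

lemma aux_attain {α β : ℝ} (h : α.HolderConjugate β) {r : ℝ} (hr : 0 ≤ r) :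
    ∃ s : ℝ, 0 ≤ s ∧ s * r - s ^ α / α = r ^ β / β := by
  refine ⟨r ^ (β - 1), by positivity, ?_⟩
  have hb := h.symm.lt
  have ha := h.lt
  have h1 : r ^ (β - 1) * r = r ^ β := by
    rcases hr.eq_or_lt with h0 | h0
    · rw [← h0, Real.zero_rpow (by linarith : β ≠ 0)]; simp
    · rw [← Real.rpow_add_one h0.ne']; simp
  have h2 : (r ^ (β - 1)) ^ α = r ^ β := by
    rw [← Real.rpow_mul hr]
    congr 1
    exact h.symm.sub_one_mul_conj
  rw [h1, h2]
  have := h.inv_add_inv_eq_one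
  have e : β⁻¹ = 1 - α⁻¹ := by linarith
  rw [div_eq_mul_inv, div_eq_mul_inv, e]; ring

lemma aux_eq {α β : ℝ} (h : α.HolderConjugate β) {r s : ℝ} (hr : 0 ≤ r) (hs : 0 ≤ s)
    (he : r ^ α / α + s ^ β / β ≤ r * s) : r ^ α = r * s ∧ s ^ β = r * s := by
  have hb := h.symm.lt
  have ha := h.lt
  have hinv := h.inv_add_inv_eq_one
  have key : r ^ α = r * s := by
    rcases hr.eq_or_lt with h0 | h0
    · rw [← h0, Real.zero_rpow (by linarith : α ≠ 0)]; simp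
    · have hmin : IsLocalMin (fun t : ℝ => t ^ α / α - t * s) r := by
        filter_upwards [lt_mem_nhds h0] with t ht
        have := Real.young_inequality_of_nonneg ht.le hs h
        linarith
      have hd : HasDerivAt (fun t : ℝ => t ^ α / α - t * s) (α * r ^ (α - 1) / α - 1 * s) r :=
        ((Real.hasDerivAt_rpow_const (Or.inl h0.ne')).div_const α).sub
          ((hasDerivAt_id r).mul_const s)
      have h0' := hmin.hasDerivAt_eq_zero hd
      rw [mul_div_cancel_left₀ _ (by linarith : α ≠ 0)] at h0'
      have : s = r ^ (α - 1) := by linarith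
      rw [this, mul_comm, ← Real.rpow_add_one h0.ne']; simp
  refine ⟨key, ?_⟩
  have hy := Real.young_inequality_of_nonneg hr hs h
  have e : β⁻¹ = 1 - α⁻¹ := by linarith
  have hbp : 0 < β⁻¹ := by positivity
  rw [key] at he hy
  have h3 : (s ^ β - r * s) * β⁻¹ = 0 := by
    have : r * s / α + s ^ β / β = r * s := le_antisymm he hy
    rw [div_eq_mul_inv, div_eq_mul_inv] at this
    have h4 : r * s * β⁻¹ = r * s - r * s * α⁻¹ := by rw [e]; ring
    linarith
  rcases mul_eq_zero.1 h3 with h5 | h5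
  · linarith
  · exact absurd h5 hbp.ne'

lemma aux_convex {E : Type*} [NormedAddCommGroup E] [NormedSpace ℝ E] {α : ℝ} (hα : 1 ≤ α)
    (p q : E) {a b : ℝ} (ha : 0 ≤ a) (hb : 0 ≤ b) (hab : a + b = 1) :
    ‖a • p + b • q‖ ^ α / α ≤ a * (‖p‖ ^ α / α) + b * (‖q‖ ^ α / α) := by
  have h1 : ‖a • p + b • q‖ ≤ a * ‖p‖ + b * ‖q‖ := by
    refine (norm_add_le _ _).trans ?_
    rw [norm_smul, norm_smul, Real.norm_of_nonneg ha, Real.norm_of_nonneg hb]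
  have h2 : ‖a • p + b • q‖ ^ α ≤ (a * ‖p‖ + b * ‖q‖) ^ α :=
    Real.rpow_le_rpow (norm_nonneg _) h1 (by linarith)
  have h3 := (convexOn_rpow hα).2 (norm_nonneg p) (norm_nonneg q) ha hb hab
  simp only [smul_eq_mul] at h3
  have h4 := h2.trans h3
  have : a * (‖p‖ ^ α / α) + b * (‖q‖ ^ α / α) = (a * ‖p‖ ^ α + b * ‖q‖ ^ α) / α := by ring
  rw [this]
  gcongr

/-- Core surjectivity (Rockafellar), via the Fitzpatrick function. -/
lemma aux_core {α β : ℝ} (h : α.HolderConjugate β) {V : Type*} [NormedAddCommGroup V]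
    [NormedSpace ℝ V]
    (hrefl : Function.Surjective (inclusionInDoubleDual ℝ V))
    (G : Set (V × StrongDual ℝ V))
    (hmono : ∀ p ∈ G, ∀ q ∈ G, 0 ≤ (p.2 - q.2) (p.1 - q.1))
    (hmax : ∀ q : V × StrongDual ℝ V, (∀ p ∈ G, 0 ≤ (p.2 - q.2) (p.1 - q.1)) → q ∈ G) :
    ∃ z : V, ∃ zs : StrongDual ℝ V, (z, zs) ∈ G ∧ ‖z‖ ^ α / α + ‖zs‖ ^ β / β ≤ - zs z := by
  have hb := h.symm.lt
  have ha := h.lt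
  have young : ∀ (v : V) (vs : StrongDual ℝ V), 0 ≤ ‖v‖ ^ α / α + ‖vs‖ ^ β / β + vs v := by
    intro v vs
    have h1 := Real.young_inequality_of_nonneg (norm_nonneg v) (norm_nonneg vs) h
    have h2 := vs.le_opNorm v
    have h3 := neg_abs_le (vs v)
    rw [Real.norm_eq_abs] at h2
    nlinarith
  -- nonempty
  have hne : G.Nonempty := by
    by_contra hcon
    rw [Set.not_nonempty_iff_eq_empty] at hcon
    have := hmax 0 (by simp [hcon])
    simp [hcon] at this
  obtain ⟨p0, hp0⟩ := hne
  -- the two convex sets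
  let H : Set ((V × StrongDual ℝ V) × ℝ) :=
    {p | ‖p.1.1‖ ^ α / α + ‖p.1.2‖ ^ β / β + p.2 < 0}
  let K : Set ((V × StrongDual ℝ V) × ℝ) :=
    {p | ∀ q ∈ G, q.2 p.1.1 + p.1.2 q.1 - q.2 q.1 ≤ p.2}
  have hHo : IsOpen H := by
    refine isOpen_lt ?_ continuous_const
    refine ((Continuous.div_const ?_ _).add (Continuous.div_const ?_ _)).add continuous_snd
    · exact (by fun_prop : Continuous fun p : (V × StrongDual ℝ V) × ℝ => ‖p.1.1‖).rpow_const
        (fun _ => Or.inr (by linarith))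
    · exact (by fun_prop : Continuous fun p : (V × StrongDual ℝ V) × ℝ => ‖p.1.2‖).rpow_const
        (fun _ => Or.inr (by linarith))
  have hHc : Convex ℝ H := by
    intro p hp q hq a b ha' hb' hab
    simp only [H, Set.mem_ofPred_eq, Prod.fst_add, Prod.snd_add, Prod.smul_fst, Prod.smul_snd,
      smul_eq_mul] at hp hq ⊢
    have h1 := aux_convex ha.le p.1.1 q.1.1 ha' hb' hab
    have h2 := aux_convex hb.le p.1.2 q.1.2 ha' hb' hab
    rcases ha'.eq_or_lt with h0 | h0
    · have hb1 : b = 1 := by linarith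
      subst hb1; subst h0
      linarith
    · have h3 := mul_neg_of_pos_of_neg h0 hp
      have h4 := mul_nonpos_of_nonneg_of_nonpos hb' hq.le
      nlinarith
  have hKc : Convex ℝ K := by
    intro p hp q hq a b ha' hb' hab r hr
    have h1 := mul_le_mul_of_nonneg_left (hp r hr) ha'
    have h2 := mul_le_mul_of_nonneg_left (hq r hr) hb'
    simp only [Prod.fst_add, Prod.snd_add, Prod.smul_fst, Prod.smul_snd, smul_eq_mul,
      map_add, map_smul, _root_.add_apply, _root_.smul_apply]
    have h3 : r.2 r.1 = a * r.2 r.1 + b * r.2 r.1 := by rw [← add_mul, hab, one_mul]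
    nlinarith
  have hdis : Disjoint H K := by
    rw [Set.disjoint_left]
    rintro ⟨⟨v, vs⟩, t⟩ hH hK
    simp only [H, K, Set.mem_ofPred_eq] at hH hK
    have hy := young v vs
    -- t < vs v
    have hG : (v, vs) ∈ G := by
      apply hmax
      intro p hp
      have := hK p hp
      simp only [map_sub, _root_.sub_apply]
      linarith
    have := hK _ hG
    simp only at this
    linarith
  obtain ⟨f, u, hfH, hfK⟩ := geometric_hahn_banach_open hHc hHo hKc hdis
  set c : ℝ := f (0, 1) with hc
  have hsplit : ∀ (v : V) (vs : StrongDual ℝ V) (t : ℝ),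
      f ((v, vs), t) = f ((v, 0), 0) + f ((0, vs), 0) + t * c := by
    intro v vs t
    have : ((v, vs), t) = ((v, (0 : StrongDual ℝ V)), (0:ℝ)) + (((0:V), vs), (0:ℝ))
        + t • ((0 : V × StrongDual ℝ V), (1 : ℝ)) := by
      simp
    rw [this, map_add, map_add, map_smul, smul_eq_mul]
  have hGK : ∀ p ∈ G, (p, p.2 p.1) ∈ K := by
    intro p hp q hq
    have := hmono p hp q hq
    simp only [map_sub, _root_.sub_apply] at this
    simp only
    linarith
  have hcpos : 0 < c := by
    have h1 := hfK _ (hGK p0 hp0)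
    have h2 := hfH (p0, -(‖p0.1‖ ^ α / α + ‖p0.2‖ ^ β / β) - 1)
      (show _ + _ + _ < (0:ℝ) by dsimp only; linarith)
    have hs1 := hsplit p0.1 p0.2 (p0.2 p0.1)
    have hs2 := hsplit p0.1 p0.2 (-(‖p0.1‖ ^ α / α + ‖p0.2‖ ^ β / β) - 1)
    simp only [Prod.mk.eta] at hs1 hs2
    rw [hs1] at h1
    rw [hs2] at h2
    have hy := young p0.1 p0.2
    have h5 : 0 < (‖p0.1‖ ^ α / α + ‖p0.2‖ ^ β / β + p0.2 p0.1 + 1) * c := by nlinarith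
    exact (pos_iff_pos_of_mul_pos h5).1 (by linarith)
  -- extract z, zs
  let L1 : StrongDual ℝ V := f.comp ((ContinuousLinearMap.inl ℝ (V × StrongDual ℝ V) ℝ).comp
    (ContinuousLinearMap.inl ℝ V (StrongDual ℝ V)))
  let L2 : StrongDual ℝ (StrongDual ℝ V) :=
    f.comp ((ContinuousLinearMap.inl ℝ (V × StrongDual ℝ V) ℝ).comp
    (ContinuousLinearMap.inr ℝ V (StrongDual ℝ V)))
  obtain ⟨z, hz⟩ := hrefl (-(c⁻¹ • L2))
  let zs : StrongDual ℝ V := -(c⁻¹ • L1)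
  have hzs : ∀ v, f ((v, 0), 0) = -(c * zs v) := by
    intro v
    have : zs v = -(c⁻¹ * f ((v, 0), 0)) := rfl
    rw [this]; field_simp; 
  have hz' : ∀ vs : StrongDual ℝ V, f ((0, vs), 0) = -(c * vs z) := by
    intro vs
    have h1 : vs z = -(c⁻¹ * f ((0, vs), 0)) := by
      have := congrArg (fun F => F vs) hz
      simpa [L2] using this
    rw [h1]; field_simp; 
  have main : ∀ (v : V) (vs : StrongDual ℝ V), ∀ p ∈ G, - zs v - vs z - (‖v‖ ^ α / α + ‖vs‖ ^ β / β)
      ≤ p.2 p.1 - zs p.1 - p.2 z := by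
    intro v vs p hp
    have h1 := hfK _ (hGK p hp)
    have hs1 := hsplit p.1 p.2 (p.2 p.1)
    simp only [Prod.mk.eta] at hs1
    rw [hs1, hzs, hz'] at h1
    refine le_of_forall_pos_le_add fun ε hε => ?_
    have h2 := hfH ((v, vs), -(‖v‖ ^ α / α + ‖vs‖ ^ β / β) - ε)
      (show _ + _ + _ < (0:ℝ) by dsimp only; linarith)
    rw [hsplit, hzs, hz'] at h2
    have h3 := h2.trans_le h1
    have h4 : c * (- zs v - vs z - (‖v‖ ^ α / α + ‖vs‖ ^ β / β) - ε)
      < c * (p.2 p.1 - zs p.1 - p.2 z) := by nlinarith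
    have := lt_of_mul_lt_mul_left h4 hcpos.le
    linarith
  -- norming elements
  obtain ⟨e, he1, he2⟩ : ∃ e : V, ‖e‖ ≤ 1 ∧ zs e = ‖zs‖ := by
    obtain ⟨g, hg1, hg2⟩ := exists_dual_vector'' ℝ zs
    obtain ⟨e, rfl⟩ := hrefl g
    refine ⟨e, ?_, by simpa using hg2⟩
    rw [← (inclusionInDoubleDualLi (𝕜 := ℝ) (E := V)).norm_map e]
    exact hg1
  obtain ⟨es, hes1, hes2⟩ := exists_dual_vector'' ℝ z
  obtain ⟨s, hs0, hs⟩ := aux_attain h (norm_nonneg zs)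
  obtain ⟨t, ht0, ht⟩ := aux_attain h.symm (norm_nonneg z)
  have fin : ∀ p ∈ G, ‖z‖ ^ α / α + ‖zs‖ ^ β / β ≤ p.2 p.1 - zs p.1 - p.2 z := by
    intro p hp
    have h1 := main (-(s • e)) (-(t • es)) p hp
    simp only [map_neg, map_smul, _root_.neg_apply, _root_.smul_apply,
      smul_eq_mul, norm_neg, norm_smul, Real.norm_of_nonneg hs0, Real.norm_of_nonneg ht0, he2,
      hes2] at h1
    have h2 : (s * ‖e‖) ^ α / α ≤ s ^ α / α := by
      gcongr
      nlinarith
    have h3 : (t * ‖es‖) ^ β / β ≤ t ^ β / β := by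
      gcongr
      nlinarith
    simp only [RCLike.ofReal_real_eq_id, id] at h1
    linarith
  have hzG : (z, zs) ∈ G := by
    apply hmax
    intro p hp
    have h1 := fin p hp
    have h2 := young z zs
    simp only [map_sub, _root_.sub_apply]
    linarith
  refine ⟨z, zs, hzG, ?_⟩
  have := fin _ hzG
  simp only at this
  linarith

lemma aux_norm {α : ℝ} (hα : 1 < α) {V : Type*} [NormedAddCommGroup V] [NormedSpace ℝ V]
    {u : V} {w : StrongDual ℝ V} (h : w ∈ genJ α V u) : ‖w‖ = ‖u‖ ^ (α - 1) := by
  have h1 := h.2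
  have h0 : 0 < α - 1 := by linarith
  have h2 : (‖w‖ ^ (α / (α - 1))) ^ ((α - 1) / α) = (‖u‖ ^ α) ^ ((α - 1) / α) := by rw [h1]
  rw [← Real.rpow_mul (norm_nonneg _), ← Real.rpow_mul (norm_nonneg _)] at h2
  have e1 : α / (α - 1) * ((α - 1) / α) = 1 := by field_simp
  have e2 : α * ((α - 1) / α) = α - 1 := by field_simp
  rwa [e1, e2, Real.rpow_one] at h2

lemma aux_unique {α : ℝ} (hα : 1 < α) {V : Type*} [NormedAddCommGroup V] [NormedSpace ℝ V]
    [StrictConvexSpace ℝ V] {u₁ u₂ : V} {w₁ w₂ : StrongDual ℝ V}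
    (h₁ : w₁ ∈ genJ α V u₁) (h₂ : w₂ ∈ genJ α V u₂) (hle : (w₁ - w₂) (u₁ - u₂) ≤ 0) :
    u₁ = u₂ := by
  have n1 := aux_norm hα h₁
  have n2 := aux_norm hα h₂
  have hpow : ∀ r : ℝ, 0 ≤ r → r ^ α = r ^ (α - 1) * r := by
    intro r hr
    rcases hr.eq_or_lt with h0 | h0
    · rw [← h0, Real.zero_rpow (by linarith : α ≠ 0)]; simp
    · rw [← Real.rpow_add_one h0.ne']; simp
  have a1 := h₁.1
  have a2 := h₂.1
  rw [hpow _ (norm_nonneg _)] at a1 a2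
  have b1 : w₁ u₂ ≤ ‖u₁‖ ^ (α - 1) * ‖u₂‖ := by
    rw [← n1]; exact (le_abs_self _).trans (w₁.le_opNorm u₂)
  have b2 : w₂ u₁ ≤ ‖u₂‖ ^ (α - 1) * ‖u₁‖ := by
    rw [← n2]; exact (le_abs_self _).trans (w₂.le_opNorm u₁)
  simp only [map_sub, _root_.sub_apply] at hle
  have hm : (‖u₁‖ ^ (α - 1) - ‖u₂‖ ^ (α - 1)) * (‖u₁‖ - ‖u₂‖) ≤ 0 := by nlinarith
  have hr : ‖u₁‖ = ‖u₂‖ := by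
    rcases lt_trichotomy ‖u₁‖ ‖u₂‖ with hlt | heq | hlt
    · have := Real.rpow_lt_rpow (norm_nonneg _) hlt (by linarith : 0 < α - 1)
      nlinarith
    · exact heq
    · have := Real.rpow_lt_rpow (norm_nonneg _) hlt (by linarith : 0 < α - 1)
      nlinarith
  rcases (norm_nonneg u₁).eq_or_lt with h0 | h0
  · have k1 : u₁ = 0 := norm_eq_zero.1 h0.symm
    have k2 : u₂ = 0 := norm_eq_zero.1 (hr.symm.trans h0.symm)
    rw [k1, k2]
  · refine eq_of_norm_eq_of_norm_add_eq hr (le_antisymm (norm_add_le _ _) ?_)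
    have hk : 0 < ‖u₁‖ ^ (α - 1) := Real.rpow_pos_of_pos h0 _
    have b3 : w₁ (u₁ + u₂) ≤ ‖u₁‖ ^ (α - 1) * ‖u₁ + u₂‖ := by
      rw [← n1]; exact (le_abs_self _).trans (w₁.le_opNorm _)
    rw [map_add] at b3
    rw [← hr] at a2 b1 b2 ⊢
    refine le_of_mul_le_mul_left ?_ hk
    nlinarith

/-- existence and uniqueness of solutions of the resolvent equation
for a maximal monotone operator on a reflexive Banach space with uniformly convex
space and dual. -/
theorem statement4 (α : ℝ) (hα : 1 < α) (V : Type*) [NormedAddCommGroup V]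
    [NormedSpace ℝ V] [CompleteSpace V] [UniformConvexSpace V]
    [UniformConvexSpace (StrongDual ℝ V)]
    (hrefl : Function.Surjective (inclusionInDoubleDual ℝ V))
    (A : V → Set (StrongDual ℝ V)) (hA : MaximalMonotoneOp A)
    (lam : ℝ) (hlam : 0 < lam) (x : V) :
    ∃! xl : V, ∃ w ∈ genJ α V (xl - x), ∃ y ∈ A xl, w + lam • y = 0 := by
  have hmax : ∀ (z : V) (zs : StrongDual ℝ V),
      (∀ a, ∀ as ∈ A a, 0 ≤ (as - zs) (a - z)) → zs ∈ A z := by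
    intro z zs hz
    have hB := hA.2 (fun u => A u ∪ {v | u = z ∧ v = zs}) ?_ (fun u => Set.subset_union_left) z
    · rw [← hB]; exact Or.inr ⟨rfl, rfl⟩
    · rintro u₁ u₂ v₁ (h1 | ⟨rfl, rfl⟩) v₂ (h2 | ⟨rfl, rfl⟩)
      · exact hA.1 _ _ _ h1 _ h2
      · exact hz _ _ h1
      · have := hz _ _ h2
        simp only [map_sub, _root_.sub_apply] at this ⊢
        linarith
      · simp
  have hconj : α.HolderConjugate (α / (α - 1)) := Real.HolderConjugate.conjExponent hα
  obtain ⟨z, zs, hG, hle⟩ := aux_core hconj hrefl {p | lam⁻¹ • p.2 ∈ A (p.1 + x)} (by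
    intro p hp q hq
    have h1 := hA.1 _ _ _ hp _ hq
    have e : lam⁻¹ • p.2 - lam⁻¹ • q.2 = lam⁻¹ • (p.2 - q.2) := (smul_sub _ _ _).symm
    rw [e, add_sub_add_right_eq_sub, _root_.smul_apply, smul_eq_mul] at h1
    exact nonneg_of_mul_nonneg_right h1 (inv_pos.2 hlam)) (by
    intro q hq
    refine hmax _ _ fun a as ha => ?_
    have h1 := hq (a - x, lam • as) (by simpa [smul_smul, hlam.ne'] using ha)
    have e : as - lam⁻¹ • q.2 = lam⁻¹ • (lam • as - q.2) := by
      rw [smul_sub, smul_smul, inv_mul_cancel₀ hlam.ne', one_smul]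
    rw [e, _root_.smul_apply, smul_eq_mul, show a - (q.1 + x) = a - x - q.1 by abel]
    exact mul_nonneg (inv_pos.2 hlam).le h1)
  have key : ∀ x₁ x₂ : V, (∃ w ∈ genJ α V (x₁ - x), ∃ y ∈ A x₁, w + lam • y = 0) →
      (∃ w ∈ genJ α V (x₂ - x), ∃ y ∈ A x₂, w + lam • y = 0) → x₁ = x₂ := by
    rintro x₁ x₂ ⟨w₁, hw₁, y₁, hy₁, he₁⟩ ⟨w₂, hw₂, y₂, hy₂, he₂⟩
    have := aux_unique hα hw₁ hw₂ (by
      rw [eq_neg_of_add_eq_zero_left he₁, eq_neg_of_add_eq_zero_left he₂,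
        sub_sub_sub_cancel_right]
      have h1 := mul_nonneg hlam.le (hA.1 _ _ _ hy₁ _ hy₂)
      simp only [map_sub, _root_.sub_apply, _root_.neg_apply,
        _root_.smul_apply, smul_eq_mul] at h1 ⊢
      linarith)
    exact sub_left_injective this
  have hex : ∃ w ∈ genJ α V (z + x - x), ∃ y ∈ A (z + x), w + lam • y = 0 := by
   refine ⟨-zs, ?_, lam⁻¹ • zs, hG, ?_⟩
   · rw [add_sub_cancel_right]
     have h1 : - zs z ≤ ‖z‖ * ‖zs‖ := by
       have h2 := zs.le_opNorm z
       rw [Real.norm_eq_abs] at h2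
       have := neg_le_abs (zs z)
       linarith
     obtain ⟨e1, e2⟩ := aux_eq hconj (norm_nonneg z) (norm_nonneg zs) (hle.trans h1)
     refine ⟨?_, ?_⟩
     · rw [_root_.neg_apply, e1]
       refine le_antisymm h1 ?_
       rw [e1, e2] at hle
       have := hconj.inv_add_inv_eq_one
       rw [div_eq_mul_inv, div_eq_mul_inv, ← mul_add, this, mul_one] at hle
       exact hle
     · rw [norm_neg, e1, e2]
   · rw [smul_smul, mul_inv_cancel₀ hlam.ne', one_smul, neg_add_cancel]
  refine ⟨z + x, hex, ?_⟩
  · rintro x' ⟨w', hw', y', hy', he'⟩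
    exact key _ _ ⟨w', hw', y', hy', he'⟩ hex
end

section
/- Let α > 1 and let V be a real normed space such that both V and its dual V* are strictly convex. If u1, u2 ∈ V, v1 ∈ J(u1), v2 ∈ J(u2) and ⟨v1 − v2, u1 − u2⟩ ≤ 0, then u1 = u2 and v1 = v2. In particular, the generalized duality mapping is strictly monotone: ⟨v1 − v2, u1 − u2⟩ > 0 whenever u1 ≠ u2. -/
open NormedSpace Filter Topology

theorem genJ_norm (α : ℝ) (hα : 1 < α) (V : Type*) [NormedAddCommGroup V]
    [NormedSpace ℝ V] (u : V) (v : StrongDual ℝ V) (h : v ∈ genJ α V u) :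
    ‖v‖ = ‖u‖ ^ (α - 1) ∧ v u = ‖u‖ ^ (α - 1) * ‖u‖ := by
  obtain ⟨h1, h2⟩ := h
  have hα1 : α - 1 ≠ 0 := by linarith
  have hα0 : α ≠ 0 := by linarith
  constructor
  · have h3 : (‖v‖ ^ (α / (α - 1))) ^ ((α - 1) / α) = (‖u‖ ^ α) ^ ((α - 1) / α) := by rw [h2]
    rw [← Real.rpow_mul (norm_nonneg _), ← Real.rpow_mul (norm_nonneg _)] at h3
    have e1 : α / (α - 1) * ((α - 1) / α) = 1 := by field_simp
    have e2 : α * ((α - 1) / α) = α - 1 := by field_simp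
    rwa [e1, e2, Real.rpow_one] at h3
  · rw [h1]
    have := Real.rpow_add_one' (norm_nonneg u) (y := α - 1) (by simpa using hα0)
    rw [← this]
    simp

theorem genJ_key (α : ℝ) (hα : 1 < α) (V : Type*) [NormedAddCommGroup V]
    [NormedSpace ℝ V] [StrictConvexSpace ℝ V] [StrictConvexSpace ℝ (StrongDual ℝ V)]
    (u₁ u₂ : V) (v₁ v₂ : StrongDual ℝ V)
    (h₁ : v₁ ∈ genJ α V u₁) (h₂ : v₂ ∈ genJ α V u₂)
    (h : (v₁ - v₂) (u₁ - u₂) ≤ 0) : u₁ = u₂ ∧ v₁ = v₂ := by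
  obtain ⟨n1, p1⟩ := genJ_norm α hα V u₁ v₁ h₁
  obtain ⟨n2, p2⟩ := genJ_norm α hα V u₂ v₂ h₂
  have hα1 : 0 < α - 1 := by linarith
  have q1 : v₁ u₂ ≤ ‖u₁‖ ^ (α - 1) * ‖u₂‖ := by
    rw [← n1]; exact (le_abs_self _).trans (v₁.le_opNorm u₂)
  have q2 : v₂ u₁ ≤ ‖u₂‖ ^ (α - 1) * ‖u₁‖ := by
    rw [← n2]; exact (le_abs_self _).trans (v₂.le_opNorm u₁)
  have e : (v₁ - v₂) (u₁ - u₂) = v₁ u₁ - v₁ u₂ - v₂ u₁ + v₂ u₂ := by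
    simp only [ContinuousLinearMap.sub_apply, map_sub]; ring
  rw [e] at h
  have hab : ‖u₁‖ = ‖u₂‖ := by
    rcases lt_trichotomy ‖u₁‖ ‖u₂‖ with hl | hl | hl
    · have := Real.rpow_lt_rpow (norm_nonneg _) hl hα1
      nlinarith [mul_pos (sub_pos.2 hl) (sub_pos.2 this)]
    · exact hl
    · have := Real.rpow_lt_rpow (norm_nonneg _) hl hα1
      nlinarith [mul_pos (sub_pos.2 hl) (sub_pos.2 this)]
  rw [← hab] at n2 p2 q1 q2
  by_cases h0 : ‖u₁‖ = 0
  · have z1 : u₁ = 0 := norm_eq_zero.1 h0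
    have z2 : u₂ = 0 := norm_eq_zero.1 (hab ▸ h0)
    rw [h0, Real.zero_rpow hα1.ne'] at n1 n2
    rw [z1, z2, norm_eq_zero.1 n1, norm_eq_zero.1 n2]
    exact ⟨rfl, rfl⟩
  have ha : 0 < ‖u₁‖ := lt_of_le_of_ne (norm_nonneg _) (Ne.symm h0)
  have hc : 0 < ‖u₁‖ ^ (α - 1) := Real.rpow_pos_of_pos ha _
  constructor
  · have r : SameRay ℝ u₁ u₂ := by
      rw [sameRay_iff_norm_add]
      apply le_antisymm (norm_add_le _ _)
      have := (le_abs_self _).trans (v₁.le_opNorm (u₁ + u₂))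
      rw [map_add, n1] at this
      rw [← hab]
      refine le_of_mul_le_mul_left ?_ hc
      linarith
    exact (sameRay_iff_of_norm_eq hab).1 r
  · have r : SameRay ℝ v₁ v₂ := by
      rw [sameRay_iff_norm_add]
      apply le_antisymm (norm_add_le _ _)
      have := (le_abs_self _).trans ((v₁ + v₂).le_opNorm u₁)
      rw [ContinuousLinearMap.add_apply] at this
      rw [n1, n2]
      refine le_of_mul_le_mul_right ?_ ha
      linarith
    exact (sameRay_iff_of_norm_eq (n1.trans n2.symm)).1 r

/-- if both the space and its dual are strictly convex then the
generalized duality mapping is strictly monotone. -/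
theorem statement5 (α : ℝ) (hα : 1 < α) (V : Type*) [NormedAddCommGroup V]
    [NormedSpace ℝ V] [StrictConvexSpace ℝ V] [StrictConvexSpace ℝ (StrongDual ℝ V)]
    (u₁ u₂ : V) (v₁ v₂ : StrongDual ℝ V)
    (h₁ : v₁ ∈ genJ α V u₁) (h₂ : v₂ ∈ genJ α V u₂) :
    ((v₁ - v₂) (u₁ - u₂) ≤ 0 → u₁ = u₂ ∧ v₁ = v₂) ∧
      (u₁ ≠ u₂ → 0 < (v₁ - v₂) (u₁ - u₂)) := by
  refine ⟨genJ_key α hα V u₁ u₂ v₁ v₂ h₁ h₂, fun hne => ?_⟩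
  by_contra hc
  exact hne (genJ_key α hα V u₁ u₂ v₁ v₂ h₁ h₂ (not_lt.1 hc)).1
end

section
/- Let α > 1 and let V be a strictly convex real normed space. Then the inverse duality mapping J^{-1} is single-valued: if u1, u2 ∈ V and v ∈ V* satisfy v ∈ J(u1) and v ∈ J(u2), then u1 = u2. -/
open NormedSpace Filter Topology

/-- if the space is strictly convex then the inverse duality mapping is
single-valued. -/
theorem statement6 (α : ℝ) (hα : 1 < α) (V : Type*) [NormedAddCommGroup V]
    [NormedSpace ℝ V] [StrictConvexSpace ℝ V]
    (u₁ u₂ : V) (v : StrongDual ℝ V)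
    (h₁ : v ∈ genJ α V u₁) (h₂ : v ∈ genJ α V u₂) : u₁ = u₂ := by
  obtain ⟨a1, b1⟩ := h₁
  obtain ⟨a2, b2⟩ := h₂
  have hα0 : 0 < α - 1 := by linarith
  have hn : ‖u₁‖ = ‖u₂‖ :=
    (Real.rpow_left_inj (norm_nonneg _) (norm_nonneg _) (by linarith)).1 (b1.symm.trans b2)
  rcases eq_or_lt_of_le (norm_nonneg u₁) with h0 | h0
  · have h0s : ‖u₂‖ = 0 := by rw [← hn, ← h0]
    rw [norm_eq_zero.1 h0.symm, norm_eq_zero.1 h0s]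
  · have hq : 0 < α / (α - 1) := by positivity
    have hv : ‖v‖ = ‖u₁‖ ^ (α - 1) := by
      refine (Real.rpow_left_inj (norm_nonneg _) (by positivity) hq.ne').1 ?_
      rw [b1, ← Real.rpow_mul (norm_nonneg _), mul_div_cancel₀ _ hα0.ne']
    have hp : 0 < ‖u₁‖ ^ (α - 1) := by positivity
    have hm : ‖u₁‖ ^ α = ‖u₁‖ ^ (α - 1) * ‖u₁‖ := by
      rw [← Real.rpow_add_one h0.ne']; congr 1; ring
    have hle : v (u₁ + u₂) ≤ ‖v‖ * ‖u₁ + u₂‖ :=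
      (le_abs_self _).trans (v.le_opNorm _)
    rw [map_add, a1, a2, ← hn, hm, hv, ← mul_add] at hle
    have hle' := le_of_mul_le_mul_left hle hp
    refine eq_of_norm_eq_of_norm_add_eq hn (le_antisymm (norm_add_le _ _) ?_)
    rw [← hn]; exact hle'
end

section
/- Let α > 1, let V be a real normed space whose dual V* is strictly convex (so the duality mapping is single-valued with value j), and let A : V → Set V* be a maximal-monotone multivalued operator. Suppose there exist δ > 0 and C ∈ ℝ such that ⟨v, z⟩ ≥ δ‖z‖_V^α + C for every z ∈ V and every v ∈ A(z). Then for every λ with 0 < λ < δ^{-1}, every x ∈ V, and every solution x_λ of the resolvent equation at x, the generalized Yosida approximation A_λ(x) := λ^{-1} j(x − x_λ) satisfies ⟨A_λ(x), x⟩ ≥ δ 2^{−α} ‖x‖_V^α + C. -/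
open NormedSpace Filter Topology

theorem genJ_unique (α : ℝ) (hα : 1 < α) (V : Type*) [NormedAddCommGroup V]
    [NormedSpace ℝ V] [StrictConvexSpace ℝ (StrongDual ℝ V)] (u : V)
    (f g : StrongDual ℝ V) (hf : f ∈ genJ α V u) (hg : g ∈ genJ α V u) : f = g := by
  have key : ∀ f ∈ genJ α V u, ‖f‖ = ‖u‖ ^ (α - 1) := by
    intro f hf
    have h := hf.2
    have h1 : 0 < α - 1 := by linarith
    have h2 : (‖f‖ ^ (α / (α - 1))) ^ ((α - 1) / α) = (‖u‖ ^ α) ^ ((α - 1) / α) := by rw [h]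
    rw [← Real.rpow_mul (norm_nonneg _), ← Real.rpow_mul (norm_nonneg _)] at h2
    have e1 : α / (α - 1) * ((α - 1) / α) = 1 := by field_simp
    have e2 : α * ((α - 1) / α) = α - 1 := by field_simp
    rwa [e1, e2, Real.rpow_one] at h2
  have hfn := key f hf
  have hgn := key g hg
  by_cases hu : u = 0
  · subst hu
    rw [norm_zero, Real.zero_rpow (by linarith)] at hfn hgn
    rw [norm_eq_zero.1 hfn, norm_eq_zero.1 hgn]
  · have hu' : 0 < ‖u‖ := norm_pos_iff.2 hu
    apply eq_of_norm_eq_of_norm_add_eq (hfn.trans hgn.symm)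
    apply le_antisymm (norm_add_le _ _)
    have h1 : (f + g) u ≤ ‖f + g‖ * ‖u‖ :=
      (le_abs_self _).trans ((f + g).le_opNorm u)
    rw [ContinuousLinearMap.add_apply, hf.1, hg.1] at h1
    have h2 : ‖u‖ ^ α = ‖u‖ ^ (α - 1) * ‖u‖ := by
      rw [Real.rpow_sub_one hu'.ne']; field_simp
    rw [h2, ← add_mul] at h1
    rw [hfn, hgn]
    exact le_of_mul_le_mul_right h1 hu'

/-- coercivity of the generalized Yosida approximation: if `A` is
maximal monotone and coercive with constants `δ, C`, then for `0 < λ < δ⁻¹` the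
Yosida approximation satisfies `⟨A_λ(x), x⟩ ≥ δ 2^{-α} ‖x‖^α + C`. -/
theorem statement12 (α : ℝ) (hα : 1 < α) (V : Type*) [NormedAddCommGroup V]
    [NormedSpace ℝ V] [StrictConvexSpace ℝ (StrongDual ℝ V)]
    (j : V → StrongDual ℝ V) (hj : ∀ u : V, j u ∈ genJ α V u)
    (A : V → Set (StrongDual ℝ V)) (hA : MaximalMonotoneOp A)
    (δ C : ℝ) (hδ : 0 < δ)
    (hcoer : ∀ z : V, ∀ v ∈ A z, δ * ‖z‖ ^ α + C ≤ v z)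
    (lam : ℝ) (hlam0 : 0 < lam) (hlam : lam < δ⁻¹)
    (x xl : V) (y : StrongDual ℝ V) (hy : y ∈ A xl)
    (hres : j (xl - x) + lam • y = 0) :
    δ * 2 ^ (-α) * ‖x‖ ^ α + C ≤ (lam⁻¹ • j (x - xl)) x := by
  have hneg : j (x - xl) = - j (xl - x) := by
    apply genJ_unique α hα V (x - xl) _ _ (hj _)
    have h := hj (xl - x)
    refine ⟨?_, ?_⟩
    · rw [ContinuousLinearMap.neg_apply, ← map_neg, neg_sub, h.1, norm_sub_rev]
    · rw [norm_neg, h.2, norm_sub_rev]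
  have hjy : j (x - xl) = lam • y := by
    rw [hneg]; exact neg_eq_of_add_eq_zero_right hres
  have hJ := (hj (x - xl)).1
  rw [hjy, smul_smul, inv_mul_cancel₀ hlam0.ne', one_smul]
  rw [hjy, ContinuousLinearMap.smul_apply, smul_eq_mul] at hJ
  have hc := hcoer xl y hy
  have hx : y x = y xl + y (x - xl) := by rw [map_sub]; ring
  have hl : δ * lam ≤ 1 := by
    have := mul_le_mul_of_nonneg_left hlam.le hδ.le
    rwa [mul_inv_cancel₀ hδ.ne'] at this
  have hp : 0 ≤ ‖x - xl‖ ^ α := Real.rpow_nonneg (norm_nonneg _) _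
  have hq : 0 ≤ ‖xl‖ ^ α := Real.rpow_nonneg (norm_nonneg _) _
  have hypos : 0 ≤ y (x - xl) := by
    rw [← hJ] at hp
    exact nonneg_of_mul_nonneg_right hp hlam0
  have h3 : δ * ‖x - xl‖ ^ α ≤ y (x - xl) := by
    rw [← hJ]; nlinarith
  have h4 : 2 ^ (-α) * ‖x‖ ^ α ≤ ‖xl‖ ^ α + ‖x - xl‖ ^ α := by
    have e : (2:ℝ) ^ (-α) * ‖x‖ ^ α = (‖x‖ / 2) ^ α := by
      rw [Real.div_rpow (norm_nonneg _) (by norm_num), Real.rpow_neg (by norm_num)]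
      field_simp
    rw [e]
    have ht : ‖x‖ ≤ ‖xl‖ + ‖x - xl‖ := by
      simpa using norm_add_le xl (x - xl)
    have h0 : 0 ≤ ‖x‖ / 2 := by positivity
    rcases le_total (‖x‖ / 2) ‖xl‖ with h | h
    · have := Real.rpow_le_rpow h0 h (by linarith : 0 ≤ α)
      linarith
    · have := Real.rpow_le_rpow h0 (by linarith : ‖x‖ / 2 ≤ ‖x - xl‖) (by linarith : 0 ≤ α)
      linarith
  have h5 := mul_le_mul_of_nonneg_left h4 hδ.le
  rw [hx]
  linarith
end
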